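/- Let F be a field, n ≥ 1, and let e_1, …, e_t ∈ M_n(F) be pairwise orthogonal idempotents (e_i e_j = 0 for i ≠ j, e_i^2 = e_i) with e_1 + e_2 + ⋯ + e_t = I_n, and let n_i denote the rank of e_i. Let σ_1, …, σ_t ∈ F be such that k_1 σ_1 + ⋯ + k_t σ_t ≠ 0 for every tuple of integers (k_1, …, k_t) ≠ (0, …, 0) with 0 ≤ k_i ≤ n_i for all i. Then the subspace V = { a ∈ M_n(F) : e_i a e_j = 0 for all i < j, and σ_1 Tr(e_1 a e_1) + ⋯ + σ_t Tr(e_t a e_t) = 0 } is a Mathieu subspace of M_n(F). -/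

import Mathlib

/-!
If `a ^ m ∈ V` for all `m ≥ 1`, then `a` is nilpotent, so `b * a ^ m * c` is eventually `0 ∈ V`.

To see this, take the Fitting idempotent `p` of `a` (`exists_fitting_idempotent`): it is a polynomial
in `a` divisible by a power of `X`, hence a combination of positive powers of `a`, hence in `V`; and
if `p = 0` then `a` is nilpotent. Since `p` is block lower triangular with respect to the `e i`, each
diagonal block `e i * p * e i` is again idempotent, so its trace is its rank `k i ≤ rank (e i)`
(`trace_eq_rank_of_idempotent`). The trace condition reads `∑ k i * σ i = 0`, so the hypothesis on
`σ` forces `k = 0`. Now `p` is an idempotent that is strictly block triangular, so `p = 0`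
(`eq_zero_of_diag_blocks_eq_zero`).
-/

def IsMathieu {F : Type*} [Field F] {n : ℕ} (V : Set (Matrix (Fin n) (Fin n) F)) : Prop :=
  ∀ a b c : Matrix (Fin n) (Fin n) F,
    (∀ m : ℕ, 1 ≤ m → a ^ m ∈ V) →
    ∃ N : ℕ, ∀ m : ℕ, N ≤ m → b * a ^ m * c ∈ V

open Polynomial in
/-- `aeval a q * a ^ (r + 1)` is the projection onto the invertible part in the Fitting decomposition
of `a`. -/
lemma exists_fitting_idempotent {F : Type*} [Field F] {n : ℕ} (a : Matrix (Fin n) (Fin n) F) :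
    ∃ (r : ℕ) (q : F[X]), IsIdempotentElem (aeval a q * a ^ (r + 1)) ∧
      (aeval a q * a ^ (r + 1) = 0 → a ^ (r + 1) = 0) := by
  obtain ⟨g, hg, hdvd⟩ := a.charpoly.exists_eq_pow_rootMultiplicity_mul_and_not_dvd
    a.charpoly_monic.ne_zero 0
  generalize a.charpoly.rootMultiplicity 0 = r at hg
  simp only [map_zero, sub_zero] at hg hdvd
  -- The exponent `r + 1` instead of `r` ensures that only positive powers of `a` occur in `p`.
  have hcop : IsCoprime (X ^ (r + 1)) g :=
    ((irreducible_X.coprime_iff_not_dvd).2 hdvd).pow_left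
  obtain ⟨u, v, huv⟩ := hcop
  have hzero : a ^ (r + 1) * aeval a g = 0 := by
    have h : aeval a (X * a.charpoly) = 0 := by simp [Matrix.aeval_self_charpoly]
    rw [hg, ← mul_assoc, ← pow_succ'] at h
    simpa using h
  have hone : aeval a u * a ^ (r + 1) = 1 - aeval a v * aeval a g := by
    have h := congrArg (aeval a) huv
    simp only [map_add, map_mul, map_pow, aeval_X, map_one] at h
    exact eq_sub_of_add_eq h
  have hcomm : aeval a v * aeval a g = aeval a g * aeval a v := by
    rw [← map_mul, mul_comm, map_mul]
  have hkill : a ^ (r + 1) * (aeval a v * aeval a g) = 0 := by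
    rw [hcomm, ← mul_assoc, hzero, zero_mul]
  refine ⟨r, u, ?_, fun h => ?_⟩
  · unfold IsIdempotentElem
    nth_rewrite 2 [hone]
    rw [mul_sub, mul_one, mul_assoc, hkill, mul_zero, sub_zero]
  · rw [h] at hone
    have h1 : aeval a v * aeval a g = 1 := (sub_eq_zero.1 hone.symm).symm
    rwa [h1, mul_one] at hkill

lemma trace_eq_rank_of_idempotent {F : Type*} [Field F] {n : ℕ} {p : Matrix (Fin n) (Fin n) F}
    (hp : IsIdempotentElem p) : p.trace = (p.rank : F) := by
  have h : IsIdempotentElem (Matrix.toLin' p) := by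
    unfold IsIdempotentElem
    rw [Module.End.mul_eq_comp, ← Matrix.toLin'_mul, hp.eq]
  have h2 := (LinearMap.IsIdempotentElem.isProj_range _ h).trace
  rwa [Matrix.trace_toLin'_eq] at h2

lemma eq_zero_of_rank_eq_zero {F : Type*} [Field F] {n : ℕ} {p : Matrix (Fin n) (Fin n) F}
    (hp : p.rank = 0) : p = 0 := by
  have h : LinearMap.range (Matrix.toLin' p) = ⊥ := Submodule.finrank_eq_zero.1 hp
  exact Matrix.toLin'.map_eq_zero_iff.1 (LinearMap.range_eq_bot.1 h)

section Blocks

variable {R : Type*} [Ring R] {t : ℕ} {e : Fin t → R} {p : R}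

lemma diag_block_idempotent (hidem : ∀ i, e i * e i = e i) (hsum : ∑ i, e i = 1)
    (hp : IsIdempotentElem p) (htri : ∀ i j, i < j → e i * p * e j = 0) (i : Fin t) :
    IsIdempotentElem (e i * p * e i) := by
  have key : e i * p * e i * p * e i = e i * p * e i := by
    calc e i * p * e i * p * e i = ∑ k, e i * p * e k * p * e i := by
          rw [Finset.sum_eq_single i _ (by simp)]
          intro k _ hk
          rcases lt_or_gt_of_ne hk with h | h
          · rw [mul_assoc (e i * p), mul_assoc (e i * p), htri k i h, mul_zero]
          · rw [htri i k h, zero_mul, zero_mul]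
      _ = e i * p * e i := by
          rw [← Finset.sum_mul, ← Finset.sum_mul, ← Finset.mul_sum, hsum, mul_one,
            mul_assoc (e i), hp.eq]
  calc e i * p * e i * (e i * p * e i) = e i * p * (e i * e i) * p * e i := by noncomm_ring
    _ = e i * p * e i := by rw [hidem, key]

/-- A strictly block triangular idempotent vanishes: its block rows vanish one after another, since
row `i` of `p = p * p` only involves rows `k < i` of `p`. -/
lemma eq_zero_of_diag_blocks_eq_zero (hsum : ∑ i, e i = 1)
    (hp : IsIdempotentElem p) (htri : ∀ i j, i < j → e i * p * e j = 0)
    (hdiag : ∀ i, e i * p * e i = 0) : p = 0 := by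
  have hrow : ∀ i, e i * p = 0 := by
    intro i
    induction i using WellFoundedLT.induction with
    | ind i ih =>
      calc e i * p = ∑ k, e i * p * e k * p := by
            rw [← Finset.sum_mul, ← Finset.mul_sum, hsum, mul_one, mul_assoc, hp.eq]
        _ = 0 := by
            refine Finset.sum_eq_zero fun k _ => ?_
            rcases lt_trichotomy k i with h | h | h
            · rw [mul_assoc, ih k h, mul_zero]
            · rw [h, hdiag, zero_mul]
            · rw [htri i k h, zero_mul]
  calc p = ∑ i, e i * p := by rw [← Finset.sum_mul, hsum, one_mul]
    _ = 0 := Finset.sum_eq_zero fun i _ => hrow i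

end Blocks

/-- Let `e₁, …, e_t` be orthogonal idempotents summing to `Iₙ`, with `nᵢ = rank eᵢ`, and let
`σ₁, …, σ_t ∈ F` be such that `k₁σ₁ + ⋯ + k_tσ_t ≠ 0` for every nonzero integer tuple with
`0 ≤ kᵢ ≤ nᵢ`. Then the subspace of all `a` with `eᵢ a eⱼ = 0` for `i < j` and
`∑ σᵢ Tr(eᵢ a eᵢ) = 0` is a Mathieu subspace of `Mₙ(F)`. -/
theorem stmt5 {F : Type*} [Field F] {n t : ℕ} (hn : 1 ≤ n)
    (e : Fin t → Matrix (Fin n) (Fin n) F)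
    (hidem : ∀ i, e i * e i = e i)
    (horth : ∀ i j, i ≠ j → e i * e j = 0)
    (hsum : ∑ i, e i = 1)
    (σ : Fin t → F)
    (hσ : ∀ k : Fin t → ℕ, (∀ i, k i ≤ (e i).rank) → k ≠ 0 →
      ∑ i, (k i : F) * σ i ≠ 0)
    (V : Submodule F (Matrix (Fin n) (Fin n) F))
    (hV : (V : Set (Matrix (Fin n) (Fin n) F)) =
      {a | (∀ i j : Fin t, i < j → e i * a * e j = 0) ∧
        ∑ i, σ i * Matrix.trace (e i * a * e i) = 0}) :
    IsMathieu (V : Set (Matrix (Fin n) (Fin n) F)) := by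
  intro a b c ha
  obtain ⟨r, q, hp, hnil⟩ := exists_fitting_idempotent a
  have hpV : Polynomial.aeval a q * a ^ (r + 1) ∈ V := by
    rw [Polynomial.aeval_eq_sum_range, Finset.sum_mul]
    refine V.sum_mem fun k _ => ?_
    rw [smul_mul_assoc, ← pow_add]
    exact V.smul_mem _ (ha _ (by omega))
  generalize Polynomial.aeval a q * a ^ (r + 1) = p at hp hnil hpV
  have hmem : p ∈ (V : Set (Matrix (Fin n) (Fin n) F)) := hpV
  rw [hV] at hmem
  obtain ⟨htri, htr⟩ := hmem
  have hblock := diag_block_idempotent hidem hsum hp htri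
  have hrank : (fun i => (e i * p * e i).rank) = 0 := by
    by_contra hne
    refine hσ _ (fun i => ?_) hne ?_
    · exact Matrix.rank_mul_le_right _ _
    · rw [← htr]
      refine Finset.sum_congr rfl fun i _ => ?_
      rw [trace_eq_rank_of_idempotent (hblock i), mul_comm]
  have hp0 : p = 0 := eq_zero_of_diag_blocks_eq_zero hsum hp htri fun i =>
    eq_zero_of_rank_eq_zero (congrFun hrank i)
  refine ⟨r + 1, fun m hm => ?_⟩
  rw [pow_eq_zero_of_le hm (hnil hp0), mul_zero, zero_mul]
  exact V.zero_mem
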